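/- arXiv:1006.5091 — 2 statements merged into one kernel-verified Lean document; each statement's English description precedes it below -/
import Mathlib

section
/- Let G be a group and let f : G → ℂ be a nonzero solution of the d'Alembert long equation. Then f(e) = 1 (where e is the identity of G) and 2 f(y)² = f(y²) + 1 for all y ∈ G. -/
/-- A nonzero solution `f : G → ℂ` of the d'Alembert long equation satisfies
`f 1 = 1` and `2 * f y ^ 2 = f (y ^ 2) + 1` for all `y`. -/
theorem dAlembert_long_apply_one_and_sq {G : Type*} [Group G]
    (f : G → ℂ) (hf_ne : f ≠ 0)
    (hf : ∀ x y : G, f (x * y) + f (y * x) + f (x * y⁻¹) + f (y⁻¹ * x) = 4 * f x * f y) :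
    f 1 = 1 ∧ ∀ y : G, 2 * f y ^ 2 = f (y ^ 2) + 1 := by
  obtain ⟨a, ha⟩ := Function.ne_iff.mp hf_ne
  have h1 : f 1 = 1 := by
    -- Setting `y = 1` in the equation gives `4 f(a) = 4 f(a) f(1)`.
    have h := hf a 1
    simp only [mul_one, one_mul, inv_one] at h
    apply mul_left_cancel₀ (show f a ≠ 0 from ha)
    linear_combination -h / 4
  refine ⟨h1, fun y => ?_⟩
  -- Setting `x = y` in the equation gives `2 f(y²) + 2 f(1) = 4 f(y)²`.
  have h := hf y y
  rw [mul_inv_cancel, inv_mul_cancel, h1, ← pow_two] at h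
  linear_combination -h / 2
end

section
/- Let G be a group and let f, g : G → ℂ satisfy the Wilson equation with f not identically zero. Then g satisfies the d'Alembert long equation. -/
/-- If `(f, g)` satisfies the Wilson equation with `f` not identically zero, then `g`
satisfies the d'Alembert long equation. -/
theorem wilson_implies_g_dAlembert_long {G : Type*} [Group G]
    (f g : G → ℂ) (hf_ne : f ≠ 0)
    (hfg : ∀ x y : G, f (x * y) + f (x * y⁻¹) = 2 * f x * g y) :
    ∀ x y : G, g (x * y) + g (y * x) + g (x * y⁻¹) + g (y⁻¹ * x) = 4 * g x * g y := by
  intro x y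
  obtain ⟨a, ha⟩ := Function.ne_iff.mp hf_ne
  have ha2 : 2 * f a ≠ 0 := mul_ne_zero two_ne_zero ha
  apply mul_left_cancel₀ ha2
  -- Multiplied by `2 f(a)`, the left side is the sum of `f` over the eight points
  -- `a x^{±1} y^{±1}` and `a y^{±1} x^{±1}`, by these four instances.
  have e1 := hfg a (x * y)
  have e2 := hfg a (y * x)
  have e3 := hfg a (x * y⁻¹)
  have e4 := hfg a (y⁻¹ * x)
  -- Applying the equation twice, each of the two families of four points sums to
  -- `4 f(a) g(x) g(y)`.
  have p0 := hfg a x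
  have p1 := hfg (a * x) y
  have p2 := hfg (a * x⁻¹) y
  have q0 := hfg a y
  have q1 := hfg (a * y) x
  have q2 := hfg (a * y⁻¹) x
  simp only [mul_inv_rev, inv_inv, ← mul_assoc] at *
  linear_combination -e1 - e2 - e3 - e4 + p1 + p2 + q1 + q2 + 2 * g y * p0 + 2 * g x * q0
end
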